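/- arXiv:2307.02415 — 5 statements merged into one kernel-verified Lean document; each statement's English description precedes it below -/
import Mathlib

section
/- For every finite simple graph G with maximum degree Δ, there exists a proper (Δ+1)-edge-coloring of G, i.e., a function assigning to every edge a color in {1,…,Δ+1} such that any two distinct edges sharing an endpoint receive distinct colors. -/
/-!
Among the proper partial edge colorings take one with a maximal set of colored edges, and suppose
that the edge `xy` is uncolored. Every vertex misses some color; let `x` miss `a`. A fan at `x` is
a sequence `y = y₀, y₁, …, yₙ` of neighbors of `x` such that the color of `xyᵢ₊₁` is missing at
`yᵢ`. If `x` and `yₙ` miss a common color, shifting the colors along the fan colors `xy` as well.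
If `yₙ` misses `b` and lies outside the `a`/`b`-component of `x`, then exchanging `a` and `b` on the
component of `yₙ` makes `a` a common missing color. So, by maximality, every fan vertex missing `b`
lies in the `a`/`b`-component of `x`; this component is a path or a cycle, and `x` as well as each
such fan vertex is an end of it, so there is at most one such fan vertex for each `b`.
Hence sending a fan vertex `z` that misses `b` to the fan vertex `w` for which `xw` has color `b`
is an injection of the finite set of fan vertices into itself. It is therefore onto, and `xy` is
colored after all.
-/

open Finset

section MaximumDegreeTwo

variable {V : Type*} [Fintype V] {H : SimpleGraph V} [DecidableRel H.Adj]

lemma card_degree_le_one_le_two_of_connected (hconn : H.Connected) (hdeg : ∀ v, H.degree v ≤ 2) :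
    #{v | H.degree v ≤ 1} ≤ 2 := by
  have hedges : Fintype.card V ≤ #H.edgeFinset + 1 := by
    simpa only [Nat.card_eq_fintype_card, ← SimpleGraph.edgeFinset_card] using
      hconn.card_vert_le_card_edgeSet_add_one
  have hsum : 2 * #H.edgeFinset + #{v | H.degree v ≤ 1} ≤ 2 * Fintype.card V := by
    calc 2 * #H.edgeFinset + #{v | H.degree v ≤ 1}
        = ∑ v, (H.degree v + if H.degree v ≤ 1 then 1 else 0) := by
          rw [sum_add_distrib, H.sum_degrees_eq_twice_card_edges, card_filter]
      _ ≤ ∑ _v : V, 2 := by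
          gcongr with v
          have := hdeg v
          split_ifs <;> omega
      _ = 2 * Fintype.card V := by
          rw [sum_const, card_univ, smul_eq_mul, mul_comm]
  omega

lemma eq_of_reachable_of_degree_le_one (hdeg : ∀ v, H.degree v ≤ 2) {x y z : V}
    (hx : H.degree x ≤ 1) (hy : H.degree y ≤ 1) (hz : H.degree z ≤ 1)
    (hxy : H.Reachable x y) (hxz : H.Reachable x z) (hne_y : x ≠ y) (hne_z : x ≠ z) : y = z := by
  classical
  by_contra hne
  let c := H.connectedComponentMk x
  have hdegree (v : c.supp) : (H.induce c.supp).degree v = H.degree v :=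
    SimpleGraph.degree_induce_of_neighborSet_subset fun _ hw ↦ c.mem_supp_of_adj_mem_supp v.2 hw
  have htwo : #{v | (H.induce c.supp).degree v ≤ 1} ≤ 2 :=
    card_degree_le_one_le_two_of_connected c.connected_toSimpleGraph
      fun v ↦ (hdegree v).trans_le (hdeg v)
  have hyc : y ∈ c.supp := SimpleGraph.ConnectedComponent.eq.2 hxy.symm
  have hzc : z ∈ c.supp := SimpleGraph.ConnectedComponent.eq.2 hxz.symm
  refine htwo.not_gt (two_lt_card_iff.2 ⟨⟨x, rfl⟩, ⟨y, hyc⟩, ⟨z, hzc⟩, ?_⟩)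
  simp only [mem_filter_univ, hdegree]
  exact ⟨hx, hy, hz, Subtype.coe_ne_coe.1 hne_y, Subtype.coe_ne_coe.1 hne_z,
    Subtype.coe_ne_coe.1 hne⟩

end MaximumDegreeTwo

/-- A proper partial edge coloring of `G` with colors in `K`; `none` marks the uncolored pairs,
among which are all the non-edges. -/
structure PartialEdgeColoring {V : Type*} (G : SimpleGraph V) (K : Type*) where
  color : Sym2 V → Option K
  mem_edgeSet {e : Sym2 V} {a : K} : color e = some a → e ∈ G.edgeSet
  proper {u v w : V} {a : K} : color s(u, v) = some a → color s(u, w) = some a → v = w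

namespace PartialEdgeColoring

variable {V K : Type*} {G : SimpleGraph V} (C : PartialEdgeColoring G K)

/-- The set of colored edges. -/
def support : Set (Sym2 V) := {e | C.color e ≠ none}

/-- The color `a` is missing at the vertex `v`: no edge at `v` has color `a`. -/
def Misses (v : V) (a : K) : Prop := ∀ w, C.color s(v, w) ≠ some a

/-- Some partial edge coloring colors `e` together with all edges colored by `C`. It need not agree
with `C` on the latter. -/
def Extendable (e : Sym2 V) : Prop :=
  ∃ C' : PartialEdgeColoring G K, insert e C.support ⊆ C'.support

variable {C} {a b d : K} {e : Sym2 V} {u v w x y z : V} {f : ℕ → V} {m n : ℕ}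

lemma support_subset_edgeSet : C.support ⊆ G.edgeSet := fun _ he ↦
  let ⟨_, ha⟩ := Option.ne_none_iff_exists'.1 he
  C.mem_edgeSet ha

lemma color_ne_of_mem_of_mem {e' : Sym2 V} (he : e ∈ C.support) (hne : e ≠ e') (hv : v ∈ e)
    (hv' : v ∈ e') : C.color e ≠ C.color e' := by
  obtain ⟨u, rfl⟩ := hv
  obtain ⟨w, rfl⟩ := hv'
  obtain ⟨a, ha⟩ := Option.ne_none_iff_exists'.1 he
  intro heq
  exact hne (congrArg (s(v, ·)) (C.proper ha (heq ▸ ha)))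

lemma exists_color_eq_of_not_misses (h : ¬ C.Misses v a) : ∃ w, C.color s(v, w) = some a := by
  simpa only [Misses, not_forall, not_not] using h

lemma exists_misses_of_degree_lt [Fintype K] [Fintype (G.neighborSet v)]
    (h : G.degree v < Fintype.card K) : ∃ a, C.Misses v a := by
  by_contra! hall
  choose g hg using fun a ↦ exists_color_eq_of_not_misses (hall a)
  have hinj : Function.Injective g := fun a b hab ↦
    Option.some_injective K <| (hg a).symm.trans <| hab ▸ hg b
  have hle : #(univ : Finset K) ≤ #(G.neighborFinset v) :=
    card_le_card_of_injOn g (fun a _ ↦ by simpa using C.mem_edgeSet (hg a)) hinj.injOn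
  rw [card_univ, G.card_neighborFinset_eq_degree] at hle
  omega

section Recolor

open Classical in
/-- The coloring obtained from `C` by giving the edge `e`, colored or not, a color that is missing
at both of its ends. -/
noncomputable def recolor (C : PartialEdgeColoring G K) (he : e ∈ G.edgeSet)
    (ha : ∀ v ∈ e, C.Misses v a) : PartialEdgeColoring G K where
  color := Function.update C.color e (some a)
  mem_edgeSet {e'} b hb := by
    by_cases h : e' = e
    · exact h ▸ he
    · exact C.mem_edgeSet (by rwa [Function.update_of_ne h] at hb)
  proper {u v w} b hv hw := by
    by_cases hev : s(u, v) = e <;> by_cases hew : s(u, w) = e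
    · exact Sym2.congr_right.1 (hev.trans hew.symm)
    · rw [hev, Function.update_self] at hv
      rw [Function.update_of_ne hew, ← hv] at hw
      exact absurd hw (ha u ⟨v, hev.symm⟩ w)
    · rw [hew, Function.update_self] at hw
      rw [Function.update_of_ne hev, ← hw] at hv
      exact absurd hv (ha u ⟨w, hew.symm⟩ v)
    · rw [Function.update_of_ne hev] at hv
      rw [Function.update_of_ne hew] at hw
      exact C.proper hv hw

variable (he : e ∈ G.edgeSet) (ha : ∀ v ∈ e, C.Misses v a)

lemma color_recolor_self : (C.recolor he ha).color e = some a := by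
  classical exact Function.update_self ..

lemma color_recolor_of_ne {e' : Sym2 V} (h : e' ≠ e) : (C.recolor he ha).color e' = C.color e' := by
  classical exact Function.update_of_ne h ..

lemma insert_support_subset_support_recolor : insert e C.support ⊆ (C.recolor he ha).support := by
  rintro e' (rfl | he')
  · simp [support, color_recolor_self]
  · by_cases h : e' = e
    · simp [support, h, color_recolor_self]
    · rwa [support, Set.mem_ofPred_eq, color_recolor_of_ne he ha h]

lemma misses_recolor_of_notMem (hv : v ∉ e) (hd : C.Misses v d) :
    (C.recolor he ha).Misses v d := fun w ↦ by
  rw [color_recolor_of_ne he ha fun h ↦ hv ⟨w, h.symm⟩]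
  exact hd w

lemma misses_recolor_of_color_eq (hv : v ∈ e) (hb : C.color e = some b) :
    (C.recolor he ha).Misses v b := by
  obtain ⟨u, rfl⟩ := hv
  intro w hw
  by_cases h : s(v, w) = s(v, u)
  · rw [h, color_recolor_self] at hw
    exact ha v (Sym2.mem_mk_left v u) u (hb.trans hw.symm)
  · rw [color_recolor_of_ne he ha h] at hw
    exact h (congrArg (s(v, ·)) (C.proper hw hb))

end Recolor

section Kempe

/-- The graph of the edges colored `a` or `b`. Its connected components are the Kempe chains. -/
def kempeGraph (C : PartialEdgeColoring G K) (a b : K) : SimpleGraph V where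
  Adj u v := C.color s(u, v) = some a ∨ C.color s(u, v) = some b
  symm := ⟨fun u v h ↦ by rwa [Sym2.eq_swap]⟩
  loopless := ⟨fun _ h ↦ h.elim (fun h ↦ (C.mem_edgeSet h).ne rfl) fun h ↦ (C.mem_edgeSet h).ne rfl⟩

lemma degree_kempeGraph_le_card [Fintype ((C.kempeGraph a b).neighborSet u)]
    (T : Finset (Option K)) (hT : ∀ v, (C.kempeGraph a b).Adj u v → C.color s(u, v) ∈ T) :
    (C.kempeGraph a b).degree u ≤ #T := by
  rw [← SimpleGraph.card_neighborFinset_eq_degree]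
  refine card_le_card_of_injOn (fun v ↦ C.color s(u, v)) (fun v hv ↦ hT v (by simpa using hv)) ?_
  intro v hv w _ (hvw : C.color s(u, v) = C.color s(u, w))
  have hadj : (C.kempeGraph a b).Adj u v := by simpa using hv
  exact hadj.elim (fun h ↦ C.proper h (hvw.symm.trans h))
    fun h ↦ C.proper h (hvw.symm.trans h)

lemma degree_kempeGraph_le_two [Fintype ((C.kempeGraph a b).neighborSet u)] :
    (C.kempeGraph a b).degree u ≤ 2 := by
  classical
  have hle : (C.kempeGraph a b).degree u ≤ #{some a, some b} :=
    degree_kempeGraph_le_card _ fun v hv ↦ by simpa [kempeGraph] using hv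
  exact hle.trans card_le_two

lemma degree_kempeGraph_le_one [Fintype ((C.kempeGraph a b).neighborSet u)]
    (h : C.Misses u a ∨ C.Misses u b) : (C.kempeGraph a b).degree u ≤ 1 := by
  rcases h with h | h
  · exact degree_kempeGraph_le_card {some b} fun v hv ↦ mem_singleton.2 (hv.resolve_left (h v))
  · exact degree_kempeGraph_le_card {some a} fun v hv ↦ mem_singleton.2 (hv.resolve_right (h v))

lemma eq_of_kempeGraph_reachable_of_misses [Finite V] (hx : C.Misses x a) (hy : C.Misses y b)
    (hz : C.Misses z b) (hxy : (C.kempeGraph a b).Reachable x y)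
    (hxz : (C.kempeGraph a b).Reachable x z) (hne_y : x ≠ y) (hne_z : x ≠ z) : y = z := by
  classical
  have := Fintype.ofFinite V
  exact eq_of_reachable_of_degree_le_one (fun _ ↦ degree_kempeGraph_le_two)
    (degree_kempeGraph_le_one (.inl hx)) (degree_kempeGraph_le_one (.inr hy))
    (degree_kempeGraph_le_one (.inr hz)) hxy hxz hne_y hne_z

open Classical in
/-- The colors after exchanging `a` and `b` on the edges that meet the connected component of `w` in
the `a`/`b`-colored graph. An edge with just one end in this component has neither of these colors,
so its color does not change. -/
noncomputable def kempeSwapColor (C : PartialEdgeColoring G K) (a b : K) (w : V) (e : Sym2 V) :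
    Option K :=
  if ∃ u ∈ e, (C.kempeGraph a b).Reachable w u then (C.color e).map (Equiv.swap a b)
  else C.color e

open Classical in
lemma map_swap_color_of_not_adj (h : ¬ (C.kempeGraph a b).Adj u v) :
    (C.color s(u, v)).map (Equiv.swap a b) = C.color s(u, v) := by
  obtain ⟨ha, hb⟩ := not_or.1 h
  cases hc : C.color s(u, v) with
  | none => rfl
  | some d =>
    rw [Option.map_some, Equiv.swap_apply_of_ne_of_ne]
    · rintro rfl; exact ha hc
    · rintro rfl; exact hb hc

open Classical in
lemma kempeSwapColor_of_reachable (h : (C.kempeGraph a b).Reachable w u) :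
    C.kempeSwapColor a b w s(u, v) = (C.color s(u, v)).map (Equiv.swap a b) :=
  if_pos ⟨u, Sym2.mem_mk_left u v, h⟩

lemma kempeSwapColor_of_not_reachable (h : ¬ (C.kempeGraph a b).Reachable w u) :
    C.kempeSwapColor a b w s(u, v) = C.color s(u, v) := by
  rw [kempeSwapColor]
  split_ifs with hex
  · refine map_swap_color_of_not_adj fun hadj ↦ h ?_
    obtain ⟨t, ht, hwt⟩ := hex
    rcases Sym2.mem_iff.1 ht with rfl | rfl
    · exact hwt
    · exact hwt.trans hadj.symm.reachable
  · rfl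

/-- The Kempe change exchanging `a` and `b` on the connected component of `w` in the
`a`/`b`-colored graph. -/
noncomputable def kempeSwap (C : PartialEdgeColoring G K) (a b : K) (w : V) :
    PartialEdgeColoring G K where
  color := C.kempeSwapColor a b w
  mem_edgeSet {e} d hd := by
    rw [kempeSwapColor] at hd
    split_ifs at hd
    · obtain ⟨c, hc, -⟩ := Option.map_eq_some_iff.1 hd
      exact C.mem_edgeSet hc
    · exact C.mem_edgeSet hd
  proper {u v v'} d hv hv' := by
    classical
    by_cases h : (C.kempeGraph a b).Reachable w u
    · rw [kempeSwapColor_of_reachable h] at hv hv'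
      obtain ⟨c, hc, hcd⟩ := Option.map_eq_some_iff.1 hv
      obtain ⟨c', hc', hcd'⟩ := Option.map_eq_some_iff.1 hv'
      obtain rfl := (Equiv.swap a b).injective (hcd.trans hcd'.symm)
      exact C.proper hc hc'
    · rw [kempeSwapColor_of_not_reachable h] at hv hv'
      exact C.proper hv hv'

lemma support_kempeSwap : (C.kempeSwap a b w).support = C.support := by
  ext e
  simp only [support, kempeSwap, kempeSwapColor, Set.mem_ofPred_eq]
  split_ifs <;> simp

lemma misses_kempeSwap_of_not_reachable (h : ¬ (C.kempeGraph a b).Reachable w u)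
    (hd : C.Misses u d) : (C.kempeSwap a b w).Misses u d := fun v ↦
  (kempeSwapColor_of_not_reachable h).trans_ne (hd v)

open Classical in
lemma misses_kempeSwap_of_reachable (h : (C.kempeGraph a b).Reachable w u)
    (hd : C.Misses u (Equiv.swap a b d)) : (C.kempeSwap a b w).Misses u d := fun v hv ↦ by
  obtain ⟨c, hc, hcd⟩ := Option.map_eq_some_iff.1 ((kempeSwapColor_of_reachable h).symm.trans hv)
  exact hd v (hc.trans (congrArg some (Equiv.swap_apply_eq_iff.1 hcd)))

end Kempe

section Fan

/-- The vertices `f 0 = y, f 1, …, f n` form a fan at `x` starting with the edge `xy`: each edge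
from `x` to `f (i + 1)` has a color that is missing at `f i`. Repetitions are allowed, and the
values of `f` beyond `n` are irrelevant. -/
structure IsFan (C : PartialEdgeColoring G K) (x y : V) (f : ℕ → V) (n : ℕ) : Prop where
  adj : G.Adj x y
  zero : f 0 = y
  step : ∀ i < n, ∃ a, C.Misses (f i) a ∧ C.color s(x, f (i + 1)) = some a

namespace IsFan

lemma of_le (hf : C.IsFan x y f n) (hmn : m ≤ n) : C.IsFan x y f m where
  adj := hf.adj
  zero := hf.zero
  step i hi := hf.step i (hi.trans_le hmn)

lemma adj_apply (hf : C.IsFan x y f n) {i : ℕ} (hi : i ≤ n) : G.Adj x (f i) := by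
  cases i with
  | zero => exact hf.zero ▸ hf.adj
  | succ i =>
    obtain ⟨a, -, ha⟩ := hf.step i hi
    exact C.mem_edgeSet ha

lemma update_succ (hf : C.IsFan x y f n) (hb : C.Misses (f n) b)
    (hz : C.color s(x, z) = some b) : C.IsFan x y (Function.update f (n + 1) z) (n + 1) where
  adj := hf.adj
  zero := hf.zero
  step i hi := by
    rw [Function.update_of_ne hi.ne]
    rcases (Nat.lt_succ_iff.1 hi).eq_or_lt with rfl | hin
    · exact ⟨b, hb, by rwa [Function.update_self]⟩
    · rw [Function.update_of_ne (by omega)]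
      exact hf.step i hin

lemma recolor (hf : C.IsFan x y f (n + 1)) (hnew : ∀ i ≤ n, f i ≠ f (n + 1))
    (he : s(x, f (n + 1)) ∈ G.edgeSet) (ha : ∀ v ∈ s(x, f (n + 1)), C.Misses v a) :
    (C.recolor he ha).IsFan x y f n where
  adj := hf.adj
  zero := hf.zero
  step i hi := by
    obtain ⟨d, hmiss, hd⟩ := hf.step i (by omega)
    refine ⟨d, misses_recolor_of_notMem he ha ?_ hmiss, ?_⟩
    · simp [(hf.adj_apply (by omega : i ≤ n + 1)).ne', hnew i hi.le]
    · rwa [color_recolor_of_ne he ha (mt Sym2.congr_right.1 (hnew (i + 1) hi))]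

-- Recolor the last edge of the fan; its old color is then missing both at `x` and at the last but
-- one vertex, so one proceeds with a shorter fan.
lemma extendable_of_misses (hf : C.IsFan x y f n) (hx : C.Misses x a) (hn : C.Misses (f n) a) :
    C.Extendable s(x, y) := by
  induction n using Nat.strong_induction_on generalizing C a with
  | _ n ih =>
    by_cases hrep : ∃ i < n, f i = f n
    · obtain ⟨i, hi, hin⟩ := hrep
      exact ih i hi (hf.of_le hi.le) hx (hin ▸ hn)
    push Not at hrep
    have he : s(x, f n) ∈ G.edgeSet := hf.adj_apply le_rfl
    have ha : ∀ v ∈ s(x, f n), C.Misses v a := by simp [hx, hn]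
    have hsupp := insert_support_subset_support_recolor he ha
    cases n with
    | zero => exact ⟨C.recolor he ha, by rwa [← hf.zero]⟩
    | succ n =>
      obtain ⟨b, hnb, hb⟩ := hf.step n n.lt_succ_self
      have hxb := misses_recolor_of_color_eq he ha (Sym2.mem_mk_left ..) hb
      have hn_notMem : f n ∉ s(x, f (n + 1)) := by
        simp [(hf.adj_apply n.le_succ).ne', hrep n n.lt_succ_self]
      obtain ⟨C', hC'⟩ := ih n n.lt_succ_self
        (hf.recolor (fun i hi ↦ hrep i (Nat.lt_succ_iff.2 hi)) he ha) hxb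
        (misses_recolor_of_notMem he ha hn_notMem hnb)
      exact ⟨C', (Set.insert_subset_insert ((Set.subset_insert _ _).trans hsupp)).trans hC'⟩

lemma kempeSwap (hf : C.IsFan x y f n) (ha : C.Misses x a)
    (hx : ¬ (C.kempeGraph a b).Reachable w x)
    (hb : ∀ i < n, C.Misses (f i) b → ¬ (C.kempeGraph a b).Reachable w (f i)) :
    (C.kempeSwap a b w).IsFan x y f n where
  adj := hf.adj
  zero := hf.zero
  step i hi := by
    classical
    obtain ⟨d, hmiss, hd⟩ := hf.step i hi
    refine ⟨d, ?_, (kempeSwapColor_of_not_reachable hx).trans hd⟩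
    by_cases hi_reach : (C.kempeGraph a b).Reachable w (f i)
    · have hda : d ≠ a := by
        rintro rfl
        exact ha _ hd
      have hdb : d ≠ b := by
        rintro rfl
        exact hb i hi hmiss hi_reach
      exact misses_kempeSwap_of_reachable hi_reach
        (by rwa [Equiv.swap_apply_of_ne_of_ne hda hdb])
    · exact misses_kempeSwap_of_not_reachable hi_reach hmiss

lemma kempeGraph_reachable_of_not_extendable (hf : C.IsFan x y f n)
    (hC : ¬ C.Extendable s(x, y)) (ha : C.Misses x a) (hb : C.Misses (f n) b) :
    (C.kempeGraph a b).Reachable x (f n) := by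
  classical
  induction n using Nat.strong_induction_on with
  | _ n ih =>
    by_contra hx
    have hfan : (C.kempeSwap a b (f n)).IsFan x y f n :=
      hf.kempeSwap ha (fun h ↦ hx h.symm)
        fun i hi hib h ↦ hx ((ih i hi (hf.of_le hi.le) hib).trans h.symm)
    have hxa : (C.kempeSwap a b (f n)).Misses x a :=
      misses_kempeSwap_of_not_reachable (fun h ↦ hx h.symm) ha
    have hna : (C.kempeSwap a b (f n)).Misses (f n) a :=
      misses_kempeSwap_of_reachable .rfl (by rwa [Equiv.swap_apply_left])
    have hext := hfan.extendable_of_misses hxa hna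
    rw [Extendable, support_kempeSwap] at hext
    exact hC hext

end IsFan

/-- The vertices that occur in some fan at `x` starting with the edge `xy`. -/
def fanVertices (C : PartialEdgeColoring G K) (x y : V) : Set V :=
  {z | ∃ f n, C.IsFan x y f n ∧ f n = z}

lemma self_mem_fanVertices (hxy : G.Adj x y) : y ∈ C.fanVertices x y :=
  ⟨fun _ ↦ y, 0, ⟨hxy, rfl, by simp⟩, rfl⟩

lemma adj_of_mem_fanVertices (hz : z ∈ C.fanVertices x y) : G.Adj x z := by
  obtain ⟨f, n, hf, rfl⟩ := hz
  exact hf.adj_apply le_rfl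

lemma exists_mem_fanVertices_color_eq (hC : ¬ C.Extendable s(x, y)) (hz : z ∈ C.fanVertices x y)
    (hb : C.Misses z b) : ∃ w ∈ C.fanVertices x y, C.color s(x, w) = some b := by
  obtain ⟨f, n, hf, rfl⟩ := hz
  obtain ⟨w, hw⟩ := exists_color_eq_of_not_misses fun hxb ↦ hC (hf.extendable_of_misses hxb hb)
  exact ⟨w, ⟨_, n + 1, hf.update_succ hb hw, Function.update_self ..⟩, hw⟩

lemma eq_of_mem_fanVertices_of_misses [Finite V] (hC : ¬ C.Extendable s(x, y))
    (ha : C.Misses x a) (hz : z ∈ C.fanVertices x y) (hw : w ∈ C.fanVertices x y)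
    (hzb : C.Misses z b) (hwb : C.Misses w b) : z = w := by
  have hne_z := (adj_of_mem_fanVertices hz).ne
  have hne_w := (adj_of_mem_fanVertices hw).ne
  obtain ⟨f, n, hf, rfl⟩ := hz
  obtain ⟨g, m, hg, rfl⟩ := hw
  exact eq_of_kempeGraph_reachable_of_misses ha hzb hwb
    (hf.kempeGraph_reachable_of_not_extendable hC ha hzb)
    (hg.kempeGraph_reachable_of_not_extendable hC ha hwb) hne_z hne_w

end Fan

theorem extendable_of_adj [Finite V] (hmiss : ∀ v, ∃ a, C.Misses v a) (hxy : G.Adj x y) :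
    C.Extendable s(x, y) := by
  by_contra hC
  have hy : C.color s(x, y) = none := by
    by_contra hcol
    exact hC ⟨C, Set.insert_subset hcol subset_rfl⟩
  choose missing hmissing using hmiss
  have hnext (z : C.fanVertices x y) :
      ∃ w : C.fanVertices x y, C.color s(x, w) = some (missing z) := by
    simpa using exists_mem_fanVertices_color_eq hC z.2 (hmissing z)
  choose next hcolor using hnext
  have hinj : Function.Injective next := fun z w hzw ↦ by
    have hcol : missing z = missing w :=
      Option.some_injective K <| (hcolor z).symm.trans <| hzw ▸ hcolor w
    exact Subtype.ext <| eq_of_mem_fanVertices_of_misses hC (hmissing x) z.2 w.2 (hmissing z)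
      (hcol ▸ hmissing w)
  obtain ⟨z, hz⟩ := Finite.surjective_of_injective hinj ⟨y, self_mem_fanVertices hxy⟩
  simpa [hz, hy] using hcolor z

theorem exists_support_eq_edgeSet [Finite V] [G.LocallyFinite] [Fintype K]
    (hdeg : ∀ v, G.degree v < Fintype.card K) :
    ∃ C : PartialEdgeColoring G K, C.support = G.edgeSet := by
  let uncolored : PartialEdgeColoring G K := ⟨fun _ ↦ none, by simp, by simp⟩
  obtain ⟨C, -, hmax⟩ := Set.Finite.exists_maximalFor' (support (G := G) (K := K)) Set.univ
    (Set.toFinite _) ⟨uncolored, trivial⟩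
  refine ⟨C, support_subset_edgeSet.antisymm fun e he ↦ ?_⟩
  induction e with | _ x y =>
  obtain ⟨C', hC'⟩ := extendable_of_adj (fun v ↦ exists_misses_of_degree_lt (C := C) (hdeg v)) he
  exact hmax trivial ((Set.subset_insert _ _).trans hC') (hC' (Set.mem_insert _ _))

end PartialEdgeColoring

/-- For every finite simple graph `G` with maximum degree `Δ`, there exists a proper
`(Δ+1)`-edge-coloring of `G`: a function assigning to every edge a color in a palette of
`Δ+1` colors such that any two distinct edges sharing an endpoint receive distinct colors. -/
theorem vizing_existence {V : Type*} [Fintype V] [DecidableEq V]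
    (G : SimpleGraph V) [DecidableRel G.Adj] :
    ∃ C : Sym2 V → Fin (G.maxDegree + 1),
      ∀ e ∈ G.edgeSet, ∀ f ∈ G.edgeSet, e ≠ f → (∃ v : V, v ∈ e ∧ v ∈ f) → C e ≠ C f := by
  obtain ⟨C, hC⟩ := PartialEdgeColoring.exists_support_eq_edgeSet (G := G)
    (K := Fin (G.maxDegree + 1)) fun v ↦ by
      simpa [Nat.lt_succ_iff] using G.degree_le_maxDegree v
  have hcolored (e) (he : e ∈ G.edgeSet) : ∃ a, C.color e = some a :=
    Option.ne_none_iff_exists'.1 (hC.ge he)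
  refine ⟨fun e ↦ (C.color e).getD 0, fun e he f hf hne ⟨v, hve, hvf⟩ ↦ ?_⟩
  have hcol := PartialEdgeColoring.color_ne_of_mem_of_mem (hC.ge he) hne hve hvf
  obtain ⟨a, ha⟩ := hcolored e he
  obtain ⟨b, hb⟩ := hcolored f hf
  simpa [ha, hb] using hcol
end

section
/- Let χ be a partial (Δ+1)-edge-coloring of G and let e be an uncolored edge of G. Then there exists a partial (Δ+1)-edge-coloring χ' of G in which e is colored and every edge colored by χ is also colored by χ' (i.e., the set of colored edges of χ' contains the set of colored edges of χ together with e). -/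
namespace EC

/-- A partial `k`-edge-coloring of `G`: a function assigning to each edge of `G` either a
color in the palette `Fin k` or `none` (uncolored), such that non-edges are uncolored and
any two distinct colored edges sharing an endpoint receive distinct colors. -/
def IsPartialColoring {V : Type*} (G : SimpleGraph V) (k : ℕ)
    (χ : Sym2 V → Option (Fin k)) : Prop :=
  (∀ e, e ∉ G.edgeSet → χ e = none) ∧
  ∀ e f : Sym2 V, e ≠ f → (∃ v : V, v ∈ e ∧ v ∈ f) →
    ∀ c : Fin k, χ e = some c → χ f ≠ some c

/-!
The argument is Vizing's. Grow a maximal fan `y = v 0, …, v n` at `x` from the uncolored edge `xy`: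
the color of `x v (i + 1)` is missing at `v i`. If some color is missing at both `x` and `v n`,
then shifting colors along the fan colors `xy`. Otherwise let `α` be missing at `x` and `β` at
`v n`; by maximality `β` is the color of some `x v (i + 1)`, so `β` is missing at `v i` too.
The three vertices `x`, `v i`, `v n` are ends of `α`/`β`-alternating paths, and a path has only two
ends, so `v i` or `v n` lies on a path avoiding `x`. Swapping `α` and `β` on that path makes `α`
missing there as well, and the corresponding initial part of the fan can be shifted.
-/

section Paths

variable {V : Type*} {H : SimpleGraph V}

theorem eq_of_encard_le_two {s : Set V} (hs : s.encard ≤ 2) {a b c : V} (ha : a ∈ s) (hb : b ∈ s)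
    (hc : c ∈ s) (hab : a ≠ b) (hac : a ≠ c) : b = c := by
  by_contra hbc
  have hthree : ({a, b, c} : Set V).encard = 3 :=
    Set.encard_eq_three.2 ⟨a, b, c, hab, hac, hbc, rfl⟩
  have hsub : {a, b, c} ⊆ s := by
    rintro _ (rfl | rfl | rfl) <;> assumption
  have hle : (3 : ℕ∞) ≤ 2 := hthree ▸ (Set.encard_le_encard hsub).trans hs
  exact absurd hle (by decide)

theorem eq_of_isPath_of_isPath_of_adj (hdeg : ∀ v, (H.neighborSet v).encard ≤ 2) {t u b w : V}
    (hb : (H.neighborSet b).Subsingleton) (hw : (H.neighborSet w).Subsingleton) (htu : H.Adj t u)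
    {p : H.Walk u b} {q : H.Walk u w} (hp : p.IsPath) (hq : q.IsPath)
    (htp : t ∉ p.support) (htq : t ∉ q.support) : b = w := by
  induction p generalizing t with
  | nil =>
    cases q with
    | nil => rfl
    | cons hadj q =>
      obtain rfl := hb htu.symm hadj
      simp at htq
  | @cons u u₁ _ hadj p ih =>
    cases q with
    | nil =>
      obtain rfl := hw htu.symm hadj
      simp at htp
    | @cons _ u₂ _ hadj' q =>
      have hne₁ : t ≠ u₁ := by rintro rfl; simp at htp
      have hne₂ : t ≠ u₂ := by rintro rfl; simp at htq
      obtain rfl := eq_of_encard_le_two (hdeg u) htu.symm hadj hadj' hne₁ hne₂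
      rw [SimpleGraph.Walk.cons_isPath_iff] at hp hq
      exact ih hb hadj hp.1 hq.1 hp.2 hq.2

theorem eq_of_reachable_of_neighborSet_subsingleton (hdeg : ∀ v, (H.neighborSet v).encard ≤ 2)
    {x b w : V} (hx : (H.neighborSet x).Subsingleton) (hb : (H.neighborSet b).Subsingleton)
    (hw : (H.neighborSet w).Subsingleton) (hxb : x ≠ b) (hxw : x ≠ w)
    (hrb : H.Reachable x b) (hrw : H.Reachable x w) : b = w := by
  obtain ⟨p, hp⟩ := hrb.exists_isPath
  obtain ⟨q, hq⟩ := hrw.exists_isPath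
  cases p with
  | nil => exact absurd rfl hxb
  | cons hadj p =>
    cases q with
    | nil => exact absurd rfl hxw
    | cons hadj' q =>
      obtain rfl := hx hadj hadj'
      rw [SimpleGraph.Walk.cons_isPath_iff] at hp hq
      exact eq_of_isPath_of_isPath_of_adj hdeg hb hw hadj hp.1 hq.1 hp.2 hq.2

end Paths

/-- The color `c` is missing at `v`: no edge at `v` has color `c`. -/
def Missing {V : Type*} {k : ℕ} (χ : Sym2 V → Option (Fin k)) (v : V) (c : Fin k) : Prop :=
  ∀ w, χ s(v, w) ≠ some c

/-- Some partial coloring colors `e` as well as every edge colored by `χ`, possibly after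
recoloring. -/
def IsExtendableAt {V : Type*} {k : ℕ} (G : SimpleGraph V) (χ : Sym2 V → Option (Fin k))
    (e : Sym2 V) : Prop :=
  ∃ χ' : Sym2 V → Option (Fin k),
    IsPartialColoring G k χ' ∧ χ' e ≠ none ∧ ∀ f : Sym2 V, χ f ≠ none → χ' f ≠ none

/-- The graph formed by the edges of color `α` or `β`. Its connected components are the Kempe
chains of `χ`. -/
def bicolored {V : Type*} {k : ℕ} (χ : Sym2 V → Option (Fin k)) (α β : Fin k) : SimpleGraph V :=
  SimpleGraph.fromEdgeSet {e | χ e = some α ∨ χ e = some β}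

open Classical in
/-- The coloring obtained from `χ` by exchanging `α` and `β` on the Kempe chain `C`. -/
noncomputable def kempeSwap {V : Type*} {k : ℕ} {χ : Sym2 V → Option (Fin k)} {α β : Fin k}
    (C : (bicolored χ α β).ConnectedComponent) : Sym2 V → Option (Fin k) :=
  fun e => if ∃ v ∈ e, v ∈ C then (χ e).map (Equiv.swap α β) else χ e

/-- A Vizing fan at `x` from `y`: distinct vertices `y = v 0, …, v n` such that the edge from `x` to
`v (i + 1)` has a color missing at `v i`. The values of `v` beyond `n` are irrelevant, so that
truncating a fan only changes `n`. -/
structure IsFan_s1 {V : Type*} {k : ℕ} (χ : Sym2 V → Option (Fin k)) (x y : V) (v : ℕ → V) (n : ℕ) :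
    Prop where
  zero : v 0 = y
  injOn : Set.InjOn v (Set.Iic n)
  step : ∀ i < n, ∃ c, χ s(x, v (i + 1)) = some c ∧ Missing χ (v i) c

section PartialColoring

variable {V : Type*} {k : ℕ} {G : SimpleGraph V} {χ : Sym2 V → Option (Fin k)}

theorem IsExtendableAt.of_colored {χ₁ : Sym2 V → Option (Fin k)} {e : Sym2 V}
    (h : IsExtendableAt G χ₁ e) (hle : ∀ f, χ f ≠ none → χ₁ f ≠ none) : IsExtendableAt G χ e :=
  let ⟨χ', hχ', he, hsub⟩ := h
  ⟨χ', hχ', he, fun f hf => hsub f (hle f hf)⟩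

theorem Missing.ne_of_mem {v : V} {c : Fin k} (h : Missing χ v c) {e : Sym2 V} (he : v ∈ e) :
    χ e ≠ some c := by
  obtain ⟨w, rfl⟩ := he
  exact h w

theorem IsPartialColoring.adj_of_eq_some (hχ : IsPartialColoring G k χ) {v w : V} {c : Fin k}
    (h : χ s(v, w) = some c) : G.Adj v w := by
  by_contra hadj
  simp [hχ.1 s(v, w) hadj] at h

theorem IsPartialColoring.eq_of_eq_some (hχ : IsPartialColoring G k χ) {v a b : V} {c : Fin k}
    (ha : χ s(v, a) = some c) (hb : χ s(v, b) = some c) : a = b := by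
  by_contra hab
  exact hχ.2 _ _ (fun h => hab (Sym2.congr_right.1 h)) ⟨v, by simp, by simp⟩ c ha hb

theorem IsPartialColoring.exists_missing (hχ : IsPartialColoring G k χ) (v : V)
    [Fintype (G.neighborSet v)] (hdeg : G.degree v < k) : ∃ c, Missing χ v c := by
  by_contra! hcon
  simp only [Missing, not_forall, not_not] at hcon
  choose neighbor hneighbor using hcon
  have hinj : Function.Injective neighbor := fun a b hab =>
    Option.some.inj ((hneighbor a).symm.trans (hab ▸ hneighbor b))
  have hmaps : ∀ c ∈ Finset.univ, neighbor c ∈ G.neighborFinset v := fun c _ =>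
    (G.mem_neighborFinset v _).2 (hχ.adj_of_eq_some (hneighbor c))
  have hcard := Finset.card_le_card_of_injOn neighbor hmaps hinj.injOn
  rw [Finset.card_fin, G.card_neighborFinset_eq_degree] at hcard
  exact hdeg.not_ge hcard

section Update

variable [DecidableEq V]

theorem update_some_ne_none {e f : Sym2 V} {c : Fin k} (hf : χ f ≠ none) :
    Function.update χ e (some c) f ≠ none := by
  rw [Function.update_apply]
  split_ifs
  · exact Option.some_ne_none c
  · exact hf

theorem Missing.update_of_notMem {v : V} {c : Fin k} (h : Missing χ v c) {e : Sym2 V}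
    (hv : v ∉ e) (a : Option (Fin k)) : Missing (Function.update χ e a) v c := by
  intro w
  rw [Function.update_of_ne (by rintro rfl; simp at hv)]
  exact h w

theorem IsPartialColoring.missing_update (hχ : IsPartialColoring G k χ) {x w : V} {c d : Fin k}
    (hc : χ s(x, w) = some c) (hcd : d ≠ c) :
    Missing (Function.update χ s(x, w) (some d)) x c := by
  intro u hu
  obtain rfl | huw := eq_or_ne u w
  · rw [Function.update_self] at hu
    exact hcd (Option.some.inj hu)
  · rw [Function.update_of_ne (mt Sym2.congr_right.1 huw)] at hu
    exact huw (hχ.eq_of_eq_some hu hc)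

theorem IsPartialColoring.update (hχ : IsPartialColoring G k χ) {x w : V} {c : Fin k}
    (hadj : G.Adj x w) (hx : Missing χ x c) (hw : Missing χ w c) :
    IsPartialColoring G k (Function.update χ s(x, w) (some c)) := by
  have hmissing : ∀ f : Sym2 V, ∀ v ∈ s(x, w), v ∈ f → χ f ≠ some c := by
    intro f v hv hf
    obtain rfl | rfl := Sym2.mem_iff.1 hv
    · exact hx.ne_of_mem hf
    · exact hw.ne_of_mem hf
  refine ⟨fun e he => ?_, ?_⟩
  · rw [Function.update_of_ne (by rintro rfl; exact he hadj)]
    exact hχ.1 e he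
  · rintro e f hef ⟨v, hve, hvf⟩ d hd hd'
    rw [Function.update_apply] at hd hd'
    split_ifs at hd hd' with he hf hf
    · exact hef (he.trans hf.symm)
    · exact hmissing f v (he ▸ hve) hvf (hd'.trans hd.symm)
    · exact hmissing e v (hf ▸ hvf) hve (hd.trans hd'.symm)
    · exact hχ.2 e f hef ⟨v, hve, hvf⟩ d hd hd'

end Update

section Kempe

variable {α β : Fin k}

theorem bicolored_adj {u v : V} :
    (bicolored χ α β).Adj u v ↔ (χ s(u, v) = some α ∨ χ s(u, v) = some β) ∧ u ≠ v :=
  SimpleGraph.fromEdgeSet_adj _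

theorem IsPartialColoring.encard_neighborSet_bicolored_le_two (hχ : IsPartialColoring G k χ)
    (v : V) : ((bicolored χ α β).neighborSet v).encard ≤ 2 := by
  have hmaps : Set.MapsTo (fun u => χ s(v, u)) ((bicolored χ α β).neighborSet v)
      {some α, some β} := fun u hu => (bicolored_adj.1 hu).1
  have hinj : Set.InjOn (fun u => χ s(v, u)) ((bicolored χ α β).neighborSet v) := by
    intro a ha b _ hab
    obtain h | h := (bicolored_adj.1 ha).1 <;> exact hχ.eq_of_eq_some h (hab.symm.trans h)
  calc ((bicolored χ α β).neighborSet v).encard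
      ≤ ({some α, some β} : Set (Option (Fin k))).encard :=
        Set.encard_le_encard_of_injOn hmaps hinj
    _ ≤ ({some β} : Set (Option (Fin k))).encard + 1 := Set.encard_insert_le _ _
    _ = 2 := by rw [Set.encard_singleton, one_add_one_eq_two]

theorem IsPartialColoring.neighborSet_bicolored_subsingleton (hχ : IsPartialColoring G k χ)
    {v : V} (h : Missing χ v α ∨ Missing χ v β) :
    ((bicolored χ α β).neighborSet v).Subsingleton := by
  intro a ha b hb
  have ha := (bicolored_adj.1 ha).1
  have hb := (bicolored_adj.1 hb).1
  obtain h | h := h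
  · exact hχ.eq_of_eq_some (ha.resolve_left (h a)) (hb.resolve_left (h b))
  · exact hχ.eq_of_eq_some (ha.resolve_right (h a)) (hb.resolve_right (h b))

variable {C : (bicolored χ α β).ConnectedComponent}

theorem kempeSwap_of_mem {v : V} (hv : v ∈ C) {e : Sym2 V} (he : v ∈ e) :
    kempeSwap C e = (χ e).map (Equiv.swap α β) := by
  classical exact if_pos ⟨v, he, hv⟩

theorem kempeSwap_of_notMem {v : V} (hv : v ∉ C) {e : Sym2 V} (he : v ∈ e) :
    kempeSwap C e = χ e := by
  classical
  refine ite_eq_right_iff.2 fun ⟨u, hu, huC⟩ => ?_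
  have huv : u ≠ v := ne_of_mem_of_not_mem huC hv
  obtain rfl := (Sym2.mem_and_mem_iff huv).1 ⟨hu, he⟩
  have hnadj : ¬ (bicolored χ α β).Adj u v := fun h => hv (C.mem_supp_of_adj_mem_supp huC h)
  cases hc : χ s(u, v) with
  | none => rfl
  | some c =>
    have hcα : c ≠ α := by rintro rfl; exact hnadj (bicolored_adj.2 ⟨.inl hc, huv⟩)
    have hcβ : c ≠ β := by rintro rfl; exact hnadj (bicolored_adj.2 ⟨.inr hc, huv⟩)
    rw [Option.map_some, Equiv.swap_apply_of_ne_of_ne hcα hcβ]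

theorem kempeSwap_eq_none_iff {e : Sym2 V} : kempeSwap C e = none ↔ χ e = none := by
  unfold kempeSwap
  split_ifs
  · exact Option.map_eq_none_iff
  · rfl

theorem IsPartialColoring.kempeSwap (hχ : IsPartialColoring G k χ)
    (C : (bicolored χ α β).ConnectedComponent) : IsPartialColoring G k (kempeSwap C) := by
  refine ⟨fun e he => kempeSwap_eq_none_iff.2 (hχ.1 e he), ?_⟩
  rintro e f hef ⟨v, hve, hvf⟩ c he hf
  by_cases hv : v ∈ C
  · rw [kempeSwap_of_mem hv hve] at he
    rw [kempeSwap_of_mem hv hvf] at hf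
    obtain ⟨a, ha, hac⟩ := Option.map_eq_some_iff.1 he
    obtain ⟨b, hb, hbc⟩ := Option.map_eq_some_iff.1 hf
    obtain rfl := (Equiv.swap α β).injective (hac.trans hbc.symm)
    exact hχ.2 e f hef ⟨v, hve, hvf⟩ a ha hb
  · rw [kempeSwap_of_notMem hv hve] at he
    rw [kempeSwap_of_notMem hv hvf] at hf
    exact hχ.2 e f hef ⟨v, hve, hvf⟩ c he hf

theorem Missing.kempeSwap_of_mem {v : V} {c : Fin k} (h : Missing χ v c) (hv : v ∈ C) :
    Missing (kempeSwap C) v (Equiv.swap α β c) := by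
  intro w hw
  rw [EC.kempeSwap_of_mem hv (Sym2.mem_mk_left v w)] at hw
  obtain ⟨a, ha, hac⟩ := Option.map_eq_some_iff.1 hw
  exact h w ((Equiv.swap α β).injective hac ▸ ha)

theorem Missing.kempeSwap_of_notMem {v : V} {c : Fin k} (h : Missing χ v c) (hv : v ∉ C) :
    Missing (kempeSwap C) v c := by
  intro w
  rw [EC.kempeSwap_of_notMem hv (Sym2.mem_mk_left v w)]
  exact h w

theorem Missing.kempeSwap_of_ne {v : V} {c : Fin k} (h : Missing χ v c) (hcα : c ≠ α)
    (hcβ : c ≠ β) : Missing (kempeSwap C) v c := by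
  by_cases hv : v ∈ C
  · simpa only [Equiv.swap_apply_of_ne_of_ne hcα hcβ] using h.kempeSwap_of_mem hv
  · exact h.kempeSwap_of_notMem hv

end Kempe

namespace IsFan_s1

variable {x y : V} {v : ℕ → V} {n : ℕ} {α β : Fin k}

theorem mono (hF : IsFan_s1 χ x y v n) {m : ℕ} (hmn : m ≤ n) : IsFan_s1 χ x y v m where
  zero := hF.zero
  injOn := hF.injOn.mono (Set.Iic_subset_Iic.2 hmn)
  step i hi := hF.step i (hi.trans_le hmn)

theorem apply_ne (hF : IsFan_s1 χ x y v n) {i j : ℕ} (hij : i < j) (hj : j ≤ n) : v i ≠ v j :=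
  fun h => hij.ne (hF.injOn (hij.le.trans hj) hj h)

theorem missing_of_eq_some (hF : IsFan_s1 χ x y v n) {i : ℕ} (hi : i < n) {c : Fin k}
    (hc : χ s(x, v (i + 1)) = some c) : Missing χ (v i) c := by
  obtain ⟨d, hd, hmissing⟩ := hF.step i hi
  exact Option.some.inj (hd.symm.trans hc) ▸ hmissing

theorem adj (hF : IsFan_s1 χ x y v n) (hχ : IsPartialColoring G k χ) (hxy : G.Adj x y) :
    ∀ i ≤ n, G.Adj x (v i)
  | 0, _ => hF.zero ▸ hxy
  | i + 1, hi =>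
    let ⟨_, hc, _⟩ := hF.step i hi
    hχ.adj_of_eq_some hc

theorem index_eq_of_eq_some (hF : IsFan_s1 χ x y v n) (hχ : IsPartialColoring G k χ) {i j : ℕ}
    (hi : i < n) (hj : j < n) {c : Fin k} (hci : χ s(x, v (i + 1)) = some c)
    (hcj : χ s(x, v (j + 1)) = some c) : i = j :=
  Nat.succ.inj (hF.injOn hi hj (hχ.eq_of_eq_some hci hcj))

theorem length_le (hF : IsFan_s1 χ x y v n) (hχ : IsPartialColoring G k χ) : n ≤ k := by
  choose color hcolor _ using fun i : Fin n => hF.step i i.isLt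
  have hinj : Function.Injective color := fun i j hij =>
    Fin.ext (hF.index_eq_of_eq_some hχ i.isLt j.isLt (hcolor i) (hij ▸ hcolor j))
  simpa only [Fintype.card_fin] using Fintype.card_le_of_injective color hinj

theorem snoc (hF : IsFan_s1 χ x y v n) {u : V} {c : Fin k} (hc : χ s(x, u) = some c)
    (hmissing : Missing χ (v n) c) (hu : ∀ i ≤ n, v i ≠ u) :
    IsFan_s1 χ x y (Function.update v (n + 1) u) (n + 1) := by
  have hold : ∀ i ≤ n, Function.update v (n + 1) u i = v i := fun i hi =>
    Function.update_of_ne (by omega) u v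
  have hnew : Function.update v (n + 1) u (n + 1) = u := Function.update_self ..
  refine ⟨(hold 0 n.zero_le).trans hF.zero, ?_, fun i hi => ?_⟩
  · rw [← Order.succ_eq_add_one, Order.Iic_succ, Order.succ_eq_add_one,
      Set.injOn_insert (by simp), hnew]
    refine ⟨hF.injOn.congr fun i hi => (hold i hi).symm, ?_⟩
    rintro ⟨i, hi, hiu⟩
    exact hu i hi ((hold i hi).symm.trans hiu)
  · obtain rfl | hin := (Nat.le_of_lt_succ hi).eq_or_lt
    · exact ⟨c, by rwa [hnew], by rwa [hold i le_rfl]⟩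
    · rw [hold i hin.le, hold (i + 1) hin]
      exact hF.step i hin

theorem exists_maximal (hχ : IsPartialColoring G k χ) (hun : χ s(x, y) = none) :
    ∃ v n, IsFan_s1 χ x y v n ∧ ∀ c, Missing χ (v n) c →
      Missing χ x c ∨ ∃ i < n, χ s(x, v (i + 1)) = some c := by
  obtain ⟨n, ⟨v, hF⟩, hmax⟩ :
      ∃ n, (∃ v, IsFan_s1 χ x y v n) ∧ ¬ ∃ v, IsFan_s1 χ x y v (n + 1) := by
    by_contra! hcon
    have hall : ∀ n, ∃ v, IsFan_s1 χ x y v n := fun n => by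
      induction n with
      | zero => exact ⟨fun _ => y, rfl, by simp [Set.InjOn], by simp⟩
      | succ n ih => exact hcon n ih
    obtain ⟨v, hF⟩ := hall (k + 1)
    exact (hF.length_le hχ).not_gt k.lt_succ_self
  refine ⟨v, n, hF, fun c hc => or_iff_not_imp_left.2 fun hx => ?_⟩
  obtain ⟨u, hu⟩ : ∃ u, χ s(x, u) = some c := by simpa [Missing] using hx
  obtain ⟨j, hj, rfl⟩ : ∃ j ≤ n, v j = u := by
    by_contra! hnew
    exact hmax ⟨_, hF.snoc hu hc hnew⟩
  cases j with
  | zero => simp [hF.zero, hun] at hu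
  | succ i => exact ⟨i, hj, hu⟩

theorem update_last [DecidableEq V] (hF : IsFan_s1 χ x y v (n + 1)) (hx : ∀ i ≤ n, v i ≠ x)
    (a : Option (Fin k)) : IsFan_s1 (Function.update χ s(x, v (n + 1)) a) x y v n := by
  refine ⟨hF.zero, (hF.mono n.le_succ).injOn, fun i hi => ?_⟩
  obtain ⟨c, hc, hmissing⟩ := hF.step i (hi.trans n.lt_succ_self)
  have hlast : ∀ j ≤ n, v j ≠ v (n + 1) := fun j hj => hF.apply_ne (Nat.lt_succ_of_le hj) le_rfl
  refine ⟨c, ?_, hmissing.update_of_notMem ?_ a⟩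
  · rwa [Function.update_of_ne (mt Sym2.congr_right.1 (hlast (i + 1) hi))]
  · exact Sym2.mem_iff.not.2 (not_or.2 ⟨hx i hi.le, hlast i hi.le⟩)

theorem isExtendableAt_of_missing (hF : IsFan_s1 χ x y v n) (hχ : IsPartialColoring G k χ)
    (hxy : G.Adj x y) {c : Fin k} (hx : Missing χ x c) (hn : Missing χ (v n) c) :
    IsExtendableAt G χ s(x, y) := by
  classical
  induction n generalizing χ c with
  | zero =>
    rw [hF.zero] at hn
    exact ⟨_, hχ.update hxy hx hn, by simp, fun _ => update_some_ne_none⟩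
  | succ n ih =>
    have hadj := hF.adj hχ hxy
    obtain ⟨d, hd, hmissing⟩ := hF.step n n.lt_succ_self
    have hcd : c ≠ d := by rintro rfl; exact hx _ hd
    have hfan := hF.update_last (fun i hi => (hadj i (hi.trans n.le_succ)).ne') (some c)
    have hnotMem : v n ∉ s(x, v (n + 1)) := Sym2.mem_iff.not.2 <|
      not_or.2 ⟨(hadj n n.le_succ).ne', hF.apply_ne n.lt_succ_self le_rfl⟩
    exact (ih hfan (hχ.update (hadj _ le_rfl) hx hn) (hχ.missing_update hd hcd)
      (hmissing.update_of_notMem hnotMem _)).of_colored fun _ => update_some_ne_none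

theorem kempeSwap (hF : IsFan_s1 χ x y v n) (hα : Missing χ x α)
    {C : (bicolored χ α β).ConnectedComponent} (hxC : x ∉ C)
    (hβ : ∀ i < n, χ s(x, v (i + 1)) = some β → v i ∉ C) : IsFan_s1 (kempeSwap C) x y v n := by
  refine ⟨hF.zero, hF.injOn, fun i hi => ?_⟩
  obtain ⟨c, hc, hmissing⟩ := hF.step i hi
  refine ⟨c, (kempeSwap_of_notMem hxC (Sym2.mem_mk_left _ _)).trans hc, ?_⟩
  have hcα : c ≠ α := by rintro rfl; exact hα _ hc
  obtain rfl | hcβ := eq_or_ne c β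
  · exact hmissing.kempeSwap_of_notMem (hβ i hi hc)
  · exact hmissing.kempeSwap_of_ne hcα hcβ

theorem isExtendableAt_of_not_reachable (hF : IsFan_s1 χ x y v n) (hχ : IsPartialColoring G k χ)
    (hxy : G.Adj x y) (hα : Missing χ x α) (hβ : Missing χ (v n) β)
    (hx : ¬ (bicolored χ α β).Reachable x (v n))
    (hstep : ∀ i < n, χ s(x, v (i + 1)) = some β → ¬ (bicolored χ α β).Reachable (v i) (v n)) :
    IsExtendableAt G χ s(x, y) := by
  let C := (bicolored χ α β).connectedComponentMk (v n)
  have hmem : ∀ u, u ∈ C ↔ (bicolored χ α β).Reachable u (v n) := fun u =>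
    SimpleGraph.ConnectedComponent.eq
  have hxC : x ∉ C := (hmem x).not.2 hx
  have hfan : IsFan_s1 (EC.kempeSwap C) x y v n :=
    hF.kempeSwap hα hxC fun i hi hc => (hmem (v i)).not.2 (hstep i hi hc)
  have hαn : Missing (EC.kempeSwap C) (v n) α := by
    simpa only [Equiv.swap_apply_right] using hβ.kempeSwap_of_mem ((hmem (v n)).2 .rfl)
  exact (hfan.isExtendableAt_of_missing (hχ.kempeSwap C) hxy (hα.kempeSwap_of_notMem hxC)
    hαn).of_colored fun _ => kempeSwap_eq_none_iff.not.2

theorem isExtendableAt_of_eq_some (hF : IsFan_s1 χ x y v n) (hχ : IsPartialColoring G k χ)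
    (hxy : G.Adj x y) (hα : Missing χ x α) (hβ : Missing χ (v n) β) {i : ℕ} (hi : i < n)
    (hc : χ s(x, v (i + 1)) = some β) : IsExtendableAt G χ s(x, y) := by
  have hβi : Missing χ (v i) β := hF.missing_of_eq_some hi hc
  by_cases hreach : (bicolored χ α β).Reachable x (v i)
  · have hxn : ¬ (bicolored χ α β).Reachable x (v n) := fun h =>
      hF.apply_ne hi le_rfl <| eq_of_reachable_of_neighborSet_subsingleton
        hχ.encard_neighborSet_bicolored_le_two
        (hχ.neighborSet_bicolored_subsingleton (.inl hα))
        (hχ.neighborSet_bicolored_subsingleton (.inr hβi))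
        (hχ.neighborSet_bicolored_subsingleton (.inr hβ))
        (hF.adj hχ hxy i hi.le).ne (hF.adj hχ hxy n le_rfl).ne hreach h
    refine hF.isExtendableAt_of_not_reachable hχ hxy hα hβ hxn fun j hj hcj h => hxn ?_
    obtain rfl := hF.index_eq_of_eq_some hχ hi hj hc hcj
    exact hreach.trans h
  · refine (hF.mono hi.le).isExtendableAt_of_not_reachable hχ hxy hα hβi hreach fun j hj hcj => ?_
    exact absurd (hF.index_eq_of_eq_some hχ hi (hj.trans hi) hc hcj) hj.ne'

end IsFan_s1

end PartialColoring

theorem extend_partial_coloring_general {V : Type*} (G : SimpleGraph V) [G.LocallyFinite] {k : ℕ}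
    (hdeg : ∀ v, G.degree v < k) (χ : Sym2 V → Option (Fin k)) (hχ : IsPartialColoring G k χ)
    (e : Sym2 V) (he : e ∈ G.edgeSet) (hun : χ e = none) :
    ∃ χ' : Sym2 V → Option (Fin k), IsPartialColoring G k χ' ∧ χ' e ≠ none ∧
      ∀ f : Sym2 V, χ f ≠ none → χ' f ≠ none := by
  induction e with
  | h x y =>
    obtain ⟨v, n, hF, hmax⟩ := IsFan_s1.exists_maximal hχ hun
    obtain ⟨α, hα⟩ := hχ.exists_missing x (hdeg x)
    obtain ⟨β, hβ⟩ := hχ.exists_missing (v n) (hdeg (v n))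
    obtain hβx | ⟨i, hi, hc⟩ := hmax β hβ
    · exact hF.isExtendableAt_of_missing hχ he hβx hβ
    · exact hF.isExtendableAt_of_eq_some hχ he hα hβ hi hc

/-- Let `χ` be a partial `(Δ+1)`-edge-coloring of `G` and let `e` be an uncolored edge of `G`.
Then there exists a partial `(Δ+1)`-edge-coloring `χ'` of `G` in which `e` is colored and every
edge colored by `χ` is also colored by `χ'`. -/
theorem extend_partial_coloring {V : Type*} [Fintype V] [DecidableEq V]
    (G : SimpleGraph V) [DecidableRel G.Adj]
    (χ : Sym2 V → Option (Fin (G.maxDegree + 1)))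
    (hχ : IsPartialColoring G (G.maxDegree + 1) χ)
    (e : Sym2 V) (he : e ∈ G.edgeSet) (hun : χ e = none) :
    ∃ χ' : Sym2 V → Option (Fin (G.maxDegree + 1)),
      IsPartialColoring G (G.maxDegree + 1) χ' ∧ χ' e ≠ none ∧
      ∀ f : Sym2 V, χ f ≠ none → χ' f ≠ none :=
  extend_partial_coloring_general G (fun v => Nat.lt_succ_of_le (G.degree_le_maxDegree v)) χ hχ e
    he hun

end EC
end

section
/- Let χ be a partial k-edge-coloring of G, let F = (v, x₀, …, x_t) be a fan with respect to χ, write c_i = χ(v,x_i) for i ∈ {1,…,t}, and fix j ∈ {1,…,t}. Define χ' by χ'(v,x_{i−1}) = c_i for every i ∈ {1,…,j}, χ'(v,x_j) = ⊥, and χ' = χ on all other edges (this is the shift of F from x_j). Then χ' is a partial k-edge-coloring of G, the edge (v,x_j) is uncolored under χ', and the set M(v) of missing colors at v is the same under χ and χ'. -/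
namespace EC

/-- The set `M(v)` of missing colors at a vertex `v`. -/
def missing {V : Type*} {k : ℕ} (χ : Sym2 V → Option (Fin k)) (v : V) : Set (Fin k) :=
  {c | ∀ w : V, χ s(v, w) ≠ some c}

/-- A fan `F = (v, x 0, …, x t)` with respect to `χ`. -/
def IsFan {V : Type*} (G : SimpleGraph V) {k : ℕ} (χ : Sym2 V → Option (Fin k))
    (v : V) (t : ℕ) (x : ℕ → V) : Prop :=
  (∀ i ≤ t, G.Adj v (x i)) ∧
  (∀ i ≤ t, ∀ j ≤ t, x i = x j → i = j) ∧
  χ s(v, x 0) = none ∧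
  (∀ i, 1 ≤ i → i ≤ t → χ s(v, x i) ≠ none ∧
    ∀ c : Fin k, χ s(v, x i) = some c → c ∈ missing χ (x (i - 1)))

/-!
Every color of the shifted coloring comes from `χ`: an edge `(v, x i)` with `i < j` carries the
color `c` of `(v, x (i + 1))`, and every other colored edge keeps its own color. A conflict could
only arise between `(v, x i)` and a kept edge of color `c`. At `x i` there is none because `c` is
missing there; at `v` the only edge of color `c` under `χ` was `(v, x (i + 1))`, which has given it
up. The colors at `v` are merely permuted among its edges, as `(v, x 0)` had none to lose.
-/

section Shift

variable {V C : Type*}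

/-- `χ'` is the shift of `(v, x 0, …, x j)` from `x j`: the color of `(v, x (i + 1))` moves to
`(v, x i)` for `i < j`, and `(v, x j)` loses its color. The shift is a relation between `χ` and `χ'`
rather than a function of `χ`, and does not presuppose that the vertices form a fan. -/
structure IsShift (χ χ' : Sym2 V → Option C) (v : V) (x : ℕ → V) (j : ℕ) : Prop where
  apply_of_lt : ∀ i < j, χ' s(v, x i) = χ s(v, x (i + 1))
  apply_last : χ' s(v, x j) = none
  apply_of_ne : ∀ e, (∀ i ≤ j, e ≠ s(v, x i)) → χ' e = χ e

theorem IsShift.apply_eq_some {χ χ' : Sym2 V → Option C} {v : V} {x : ℕ → V} {j : ℕ}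
    (hS : IsShift χ χ' v x j) {e : Sym2 V} {c : C} (he : χ' e = some c) :
    (∃ i < j, e = s(v, x i) ∧ χ s(v, x (i + 1)) = some c) ∨
      ((∀ i ≤ j, e ≠ s(v, x i)) ∧ χ e = some c) := by
  by_cases hfixed : ∀ i ≤ j, e ≠ s(v, x i)
  · exact .inr ⟨hfixed, hS.apply_of_ne e hfixed ▸ he⟩
  · push Not at hfixed
    obtain ⟨i, hij, rfl⟩ := hfixed
    obtain hlt | rfl := hij.lt_or_eq
    · exact .inl ⟨i, hlt, rfl, hS.apply_of_lt i hlt ▸ he⟩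
    · simp [hS.apply_last] at he

variable {G : SimpleGraph V} {k : ℕ} {χ χ' : Sym2 V → Option (Fin k)} {v : V} {x : ℕ → V}
  {t j : ℕ} {c : Fin k}

theorem IsPartialColoring.eq_of_mem_of_mem (hχ : IsPartialColoring G k χ) {e f : Sym2 V} {u : V}
    (hue : u ∈ e) (huf : u ∈ f) (he : χ e = some c) (hf : χ f = some c) : e = f :=
  by_contra fun hne => hχ.2 e f hne ⟨u, hue, huf⟩ c he hf

theorem IsPartialColoring.mem_edgeSet (hχ : IsPartialColoring G k χ) {e : Sym2 V}
    (he : χ e = some c) : e ∈ G.edgeSet :=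
  by_contra fun hne => by simp [hχ.1 e hne] at he

theorem IsFan.mono_s4 (hF : IsFan G χ v t x) (hjt : j ≤ t) : IsFan G χ v j x := by
  obtain ⟨hadj, hinj, huncolored, hcolored⟩ := hF
  exact ⟨fun i hi => hadj i (hi.trans hjt),
    fun i hi i' hi' => hinj i (hi.trans hjt) i' (hi'.trans hjt), huncolored,
    fun i hpos hi => hcolored i hpos (hi.trans hjt)⟩

theorem IsFan.mem_missing (hF : IsFan G χ v t x) {i : ℕ} (hi : i < t)
    (hc : χ s(v, x (i + 1)) = some c) : c ∈ missing χ (x i) :=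
  (hF.2.2.2 (i + 1) i.succ_pos hi).2 c hc

theorem IsFan.eq_of_mem_of_mem (hF : IsFan G χ v t x) (hχ : IsPartialColoring G k χ) {i : ℕ}
    (hi : i < t) (hc : χ s(v, x (i + 1)) = some c) {e : Sym2 V} {u : V} (hue : u ∈ e)
    (hu : u ∈ s(v, x i)) (he : χ e = some c) : e = s(v, x (i + 1)) := by
  obtain rfl | rfl := Sym2.mem_iff.1 hu
  · exact hχ.eq_of_mem_of_mem hue (Sym2.mem_mk_left _ _) he hc
  · obtain ⟨w, rfl⟩ := hue
    exact absurd he (hF.mem_missing hi hc w)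

namespace IsShift

theorem mem_edgeSet (hS : IsShift χ χ' v x j) (hχ : IsPartialColoring G k χ)
    (hF : IsFan G χ v j x) {e : Sym2 V} (he : χ' e = some c) : e ∈ G.edgeSet := by
  obtain ⟨i, hi, rfl, -⟩ | ⟨-, he⟩ := hS.apply_eq_some he
  · exact hF.1 i hi.le
  · exact hχ.mem_edgeSet he

theorem eq_of_mem_of_mem (hS : IsShift χ χ' v x j) (hχ : IsPartialColoring G k χ)
    (hF : IsFan G χ v j x) {e f : Sym2 V} {u : V} (hue : u ∈ e) (huf : u ∈ f)
    (he : χ' e = some c) (hf : χ' f = some c) : e = f := by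
  obtain ⟨i, hi, rfl, hci⟩ | ⟨he_fixed, he⟩ := hS.apply_eq_some he <;>
    obtain ⟨l, hl, rfl, hcl⟩ | ⟨hf_fixed, hf⟩ := hS.apply_eq_some hf
  · have hedges : s(v, x (i + 1)) = s(v, x (l + 1)) :=
      hχ.eq_of_mem_of_mem (Sym2.mem_mk_left _ _) (Sym2.mem_mk_left _ _) hci hcl
    have hindices : i + 1 = l + 1 := hF.2.1 _ hi _ hl (Sym2.congr_right.1 hedges)
    rw [Nat.succ_injective hindices]
  · exact absurd (hF.eq_of_mem_of_mem hχ hi hci huf hue hf) (hf_fixed _ hi)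
  · exact absurd (hF.eq_of_mem_of_mem hχ hl hcl hue huf he) (he_fixed _ hl)
  · exact hχ.eq_of_mem_of_mem hue huf he hf

theorem isPartialColoring (hS : IsShift χ χ' v x j) (hχ : IsPartialColoring G k χ)
    (hF : IsFan G χ v j x) : IsPartialColoring G k χ' :=
  ⟨fun _ hne => Option.eq_none_iff_forall_ne_some.2 fun _ he => hne (hS.mem_edgeSet hχ hF he),
    fun _ _ hne ⟨_, hue, huf⟩ _ he hf => hne (hS.eq_of_mem_of_mem hχ hF hue huf he hf)⟩

theorem missing_subset_missing (hS : IsShift χ χ' v x j) : missing χ v ⊆ missing χ' v := by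
  intro c hc w hw
  obtain ⟨i, -, -, hci⟩ | ⟨-, hcw⟩ := hS.apply_eq_some hw
  · exact hc _ hci
  · exact hc w hcw

theorem missing_eq (hS : IsShift χ χ' v x j) (huncolored : χ s(v, x 0) = none) :
    missing χ' v = missing χ v := by
  refine Set.Subset.antisymm (fun c hc w hw => ?_) hS.missing_subset_missing
  by_cases hfixed : ∀ i ≤ j, s(v, w) ≠ s(v, x i)
  · exact hc w ((hS.apply_of_ne _ hfixed).trans hw)
  · push Not at hfixed
    obtain ⟨i, hij, hwi⟩ := hfixed
    rw [hwi] at hw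
    cases i with
    | zero => simp [huncolored] at hw
    | succ i => exact hc (x i) ((hS.apply_of_lt i hij).trans hw)

end IsShift

theorem fan_shift_general (hχ : IsPartialColoring G k χ) (hF : IsFan G χ v t x) (hjt : j ≤ t)
    (hS : IsShift χ χ' v x j) :
    IsPartialColoring G k χ' ∧ χ' s(v, x j) = none ∧ missing χ' v = missing χ v :=
  ⟨hS.isPartialColoring hχ (hF.mono_s4 hjt), hS.apply_last, hS.missing_eq hF.2.2.1⟩

end Shift

/-- Shifting a fan from `x j` preserves the validity of the coloring: if `χ'` is obtained
from `χ` by setting `χ'(v, x (i-1)) = χ(v, x i)` for `1 ≤ i ≤ j`, uncoloring `(v, x j)` and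
leaving all other edges unchanged, then `χ'` is a partial `k`-edge-coloring, the edge
`(v, x j)` is uncolored under `χ'`, and the set of missing colors at `v` is unchanged. -/
theorem fan_shift {V : Type*} [Fintype V] [DecidableEq V]
    (G : SimpleGraph V) {k : ℕ}
    (χ χ' : Sym2 V → Option (Fin k))
    (hχ : IsPartialColoring G k χ)
    (v : V) (t : ℕ) (x : ℕ → V) (hF : IsFan G χ v t x)
    (j : ℕ) (hj1 : 1 ≤ j) (hjt : j ≤ t)
    (h1 : ∀ i, 1 ≤ i → i ≤ j → χ' s(v, x (i - 1)) = χ s(v, x i))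
    (h2 : χ' s(v, x j) = none)
    (h3 : ∀ e : Sym2 V, (∀ i ≤ j, e ≠ s(v, x i)) → χ' e = χ e) :
    IsPartialColoring G k χ' ∧ χ' s(v, x j) = none ∧ missing χ' v = missing χ v :=
  fan_shift_general hχ hF hjt ⟨fun i hi => h1 (i + 1) i.succ_pos hi, h2, h3⟩

end EC
end

section
/- Let χ be a partial k-edge-coloring of G and let e = (u,v) be a colored edge. Then the number of maximal alternating paths (over all pairs of distinct colors in {1,…,k}) in which e is an internal edge is at most w(e) = min(d(u), d(v)). -/
namespace EC

/-- A maximal `(c₀,c₁)`-alternating path: a simple path with distinct endpoints all of whose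
edges are colored `c₀` or `c₁`, such that each of its two endpoint vertices is incident to
exactly one edge colored `c₀` or `c₁`. -/
def IsMaxAltPath {V : Type*} (G : SimpleGraph V) {k : ℕ} (χ : Sym2 V → Option (Fin k))
    (c₀ c₁ : Fin k) {a b : V} (p : G.Walk a b) : Prop :=
  p.IsPath ∧ a ≠ b ∧
  (∀ e ∈ p.edges, χ e = some c₀ ∨ χ e = some c₁) ∧
  (∃! w : V, χ s(a, w) = some c₀ ∨ χ s(a, w) = some c₁) ∧
  (∃! w : V, χ s(b, w) = some c₀ ∨ χ s(b, w) = some c₁)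

/-- `x = (q, S)` represents a maximal alternating path of `G` under `χ`: `q` is an unordered
pair of distinct colors `{c₀, c₁}` and `S` is the edge set of a maximal `(c₀,c₁)`-alternating
path of `G`, together with the witness `e` being an internal edge of that path (i.e. `e` lies
on the path and neither endpoint of `e` is an endpoint of the path). -/
def IsMaxAltPathPairInternal {V : Type*} [DecidableEq V] (G : SimpleGraph V) {k : ℕ}
    (χ : Sym2 V → Option (Fin k)) (q : Sym2 (Fin k)) (S : Finset (Sym2 V))
    (e : Sym2 V) : Prop :=
  ∃ (c₀ c₁ : Fin k) (a b : V) (p : G.Walk a b),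
    c₀ ≠ c₁ ∧ q = s(c₀, c₁) ∧ IsMaxAltPath G χ c₀ c₁ p ∧ S = p.edges.toFinset ∧
    e ∈ p.edges ∧ a ∉ e ∧ b ∉ e

/-!
Fix an edge `uv` of color `c`. At any vertex at most one edge has a given color, so a maximal
`{c, d}`-alternating path through `u` contains *every* edge colored `c` or `d` at each of its
vertices. It is therefore a whole connected component of these edges, and is determined by the
pair `{c, d}`. If `uv` is internal to the path, then `u` has a second path edge `uw`, necessarily of
color `d`, so `w` determines the pair and hence the path: there are at most `d(u)` such paths, and
by symmetry at most `d(v)`.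
-/

section

variable {V : Type*} {G : SimpleGraph V}

theorem exists_two_edges_of_isPath_of_interior {a b x : V} {p : G.Walk a b} (hp : p.IsPath)
    (hx : x ∈ p.support) (hxa : x ≠ a) (hxb : x ≠ b) :
    ∃ y z, y ≠ z ∧ s(x, y) ∈ p.edges ∧ s(x, z) ∈ p.edges := by
  obtain ⟨i, rfl, hi⟩ := SimpleGraph.Walk.mem_support_iff_exists_getVert.mp hx
  have hi_pos : i ≠ 0 := by
    rintro rfl
    exact hxa p.getVert_zero
  have hi_lt : i < p.length := by
    refine hi.lt_of_ne ?_
    rintro rfl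
    exact hxb p.getVert_length
  obtain ⟨y, z, hyz, hN⟩ :=
    Set.ncard_eq_two.mp (hp.ncard_neighborSet_toSubgraph_internal_eq_two hi_pos hi_lt)
  have mem_edges : ∀ w ∈ ({y, z} : Set V), s(p.getVert i, w) ∈ p.edges := fun w hw ↦
    p.mem_edges_toSubgraph.mp (hN.symm ▸ hw : w ∈ p.toSubgraph.neighborSet (p.getVert i))
  exact ⟨y, z, hyz, mem_edges y (by simp), mem_edges z (by simp)⟩

theorem support_subset_of_mem_of_closed {X : Set V} {s t z : V} (r : G.Walk s t)
    (hX : ∀ x ∈ X, ∀ y, s(x, y) ∈ r.edges → y ∈ X) (hz : z ∈ r.support) (hzX : z ∈ X) :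
    ∀ y ∈ r.support, y ∈ X := by
  induction r generalizing z with
  | nil => simp_all
  | @cons s d t h r ih =>
    have hX_tail : ∀ x ∈ X, ∀ y, s(x, y) ∈ r.edges → y ∈ X := fun x hx y hxy ↦
      hX x hx y (List.mem_cons_of_mem _ hxy)
    have start_iff : s ∈ X ↔ d ∈ X :=
      ⟨fun hs ↦ hX s hs d (by simp), fun hd ↦ hX d hd s (by simp [Sym2.eq_swap])⟩
    have tail_subset : ∀ y ∈ r.support, y ∈ X := by
      rcases List.mem_cons.mp hz with rfl | hz_tail
      · exact ih hX_tail r.start_mem_support (start_iff.mp hzX)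
      · exact ih hX_tail hz_tail hzX
    have hs : s ∈ X := start_iff.mpr (tail_subset d r.start_mem_support)
    simpa [hs] using tail_subset

variable {k : ℕ} {χ : Sym2 V → Option (Fin k)}

/-- The edges whose color under `χ` belongs to the pair of colors `q`. The pair is unordered, as in
`IsMaxAltPathPairInternal`, so that `(c₀, c₁)` and `(c₁, c₀)` need not be distinguished. -/
def altEdges (χ : Sym2 V → Option (Fin k)) (q : Sym2 (Fin k)) : Set (Sym2 V) :=
  {e | ∃ c ∈ q, χ e = some c}

theorem mem_altEdges_mk {c₀ c₁ : Fin k} {e : Sym2 V} :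
    e ∈ altEdges χ s(c₀, c₁) ↔ χ e = some c₀ ∨ χ e = some c₁ := by
  simp [altEdges]

namespace IsPartialColoring

theorem eq_of_color_eq (hχ : IsPartialColoring G k χ) {x y z : V} {c : Fin k}
    (hy : χ s(x, y) = some c) (hz : χ s(x, z) = some c) : y = z := by
  by_contra hyz
  exact hχ.2 s(x, y) s(x, z) (hyz ∘ Sym2.congr_right.mp) ⟨x, by simp, by simp⟩ c hy hz

theorem colors_eq_of_mem_altEdges (hχ : IsPartialColoring G k χ) {q : Sym2 (Fin k)} {x y z : V}
    (hyz : y ≠ z) (hy : s(x, y) ∈ altEdges χ q) (hz : s(x, z) ∈ altEdges χ q) :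
    s(χ s(x, y), χ s(x, z)) = q.map some := by
  obtain ⟨c, hcq, hc⟩ := hy
  obtain ⟨d, hdq, hd⟩ := hz
  have hcd : c ≠ d := by
    rintro rfl
    exact hyz (hχ.eq_of_color_eq hc hd)
  rw [(Sym2.mem_and_mem_iff hcd).mp ⟨hcq, hdq⟩, hc, hd, Sym2.map_mk]

theorem eq_or_eq_of_mem_altEdges (hχ : IsPartialColoring G k χ) {q : Sym2 (Fin k)} {x y z w : V}
    (hyz : y ≠ z) (hy : s(x, y) ∈ altEdges χ q) (hz : s(x, z) ∈ altEdges χ q)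
    (hw : s(x, w) ∈ altEdges χ q) : w = y ∨ w = z := by
  obtain ⟨c, hcq, hc⟩ := hw
  have c_mem : some c ∈ s(χ s(x, y), χ s(x, z)) := by
    rw [hχ.colors_eq_of_mem_altEdges hyz hy hz]
    exact Sym2.mem_map.mpr ⟨c, hcq, rfl⟩
  rcases Sym2.mem_iff.mp c_mem with hcy | hcz
  · exact .inl (hχ.eq_of_color_eq hc hcy.symm)
  · exact .inr (hχ.eq_of_color_eq hc hcz.symm)

end IsPartialColoring

namespace IsMaxAltPath

variable {c₀ c₁ : Fin k} {a b : V} {p : G.Walk a b}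

theorem mem_altEdges_of_mem_edges (hp : IsMaxAltPath G χ c₀ c₁ p) {e : Sym2 V}
    (he : e ∈ p.edges) : e ∈ altEdges χ s(c₀, c₁) :=
  mem_altEdges_mk.mpr (hp.2.2.1 e he)

theorem mem_edges_of_mem_support (hχ : IsPartialColoring G k χ) (hp : IsMaxAltPath G χ c₀ c₁ p)
    {x y : V} (hx : x ∈ p.support) (hxy : s(x, y) ∈ altEdges χ s(c₀, c₁)) :
    s(x, y) ∈ p.edges := by
  have ⟨hpath, hab, hcolors, ha, hb⟩ := hp
  have not_nil : ¬ p.Nil := SimpleGraph.Walk.not_nil_of_ne hab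
  by_cases hxa : x = a
  · subst hxa
    have first_mem := p.mk_start_snd_mem_edges not_nil
    rwa [ha.unique (mem_altEdges_mk.mp hxy) (hcolors _ first_mem)]
  by_cases hxb : x = b
  · subst hxb
    have last_mem : s(x, p.penultimate) ∈ p.edges :=
      Sym2.eq_swap ▸ p.mk_penultimate_end_mem_edges not_nil
    rwa [hb.unique (mem_altEdges_mk.mp hxy) (hcolors _ last_mem)]
  obtain ⟨z, w, hzw, hz, hw⟩ := exists_two_edges_of_isPath_of_interior hpath hx hxa hxb
  rcases hχ.eq_or_eq_of_mem_altEdges hzw (hp.mem_altEdges_of_mem_edges hz)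
    (hp.mem_altEdges_of_mem_edges hw) hxy with rfl | rfl
  · exact hz
  · exact hw

theorem edges_subset_of_mem_support (hχ : IsPartialColoring G k χ)
    (hp : IsMaxAltPath G χ c₀ c₁ p) {s t z : V} {r : G.Walk s t}
    (hr : ∀ e ∈ r.edges, e ∈ altEdges χ s(c₀, c₁)) (hzp : z ∈ p.support) (hzr : z ∈ r.support) :
    r.edges ⊆ p.edges := by
  have support_subset : ∀ x ∈ r.support, x ∈ p.support :=
    support_subset_of_mem_of_closed (X := {x | x ∈ p.support}) r
      (fun x hx y hxy ↦ p.snd_mem_support_of_mem_edges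
        (hp.mem_edges_of_mem_support hχ hx (hr _ hxy))) hzr hzp
  rintro ⟨x, y⟩ hxy
  exact hp.mem_edges_of_mem_support hχ
    (support_subset x (r.fst_mem_support_of_mem_edges hxy)) (hr _ hxy)

end IsMaxAltPath

namespace IsMaxAltPathPairInternal

variable [DecidableEq V] {q : Sym2 (Fin k)} {S T : Finset (Sym2 V)} {u v : V}

theorem edges_unique (hχ : IsPartialColoring G k χ)
    (hS : IsMaxAltPathPairInternal G χ q S s(u, v))
    (hT : IsMaxAltPathPairInternal G χ q T s(u, v)) : S = T := by
  obtain ⟨c₀, c₁, a, b, p, -, rfl, hp, rfl, hep, -, -⟩ := hS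
  obtain ⟨d₀, d₁, a', b', r, -, hq, hr, rfl, her, -, -⟩ := hT
  have hup := p.fst_mem_support_of_mem_edges hep
  have hur := r.fst_mem_support_of_mem_edges her
  have p_subset_r : p.edges ⊆ r.edges :=
    hr.edges_subset_of_mem_support hχ (fun _ he ↦ hq ▸ hp.mem_altEdges_of_mem_edges he) hur hup
  have r_subset_p : r.edges ⊆ p.edges :=
    hp.edges_subset_of_mem_support hχ (fun _ he ↦ hq ▸ hr.mem_altEdges_of_mem_edges he) hup hur
  exact List.toFinset.ext fun _ ↦ ⟨fun he ↦ p_subset_r he, fun he ↦ r_subset_p he⟩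

theorem exists_adj_colors_eq (hχ : IsPartialColoring G k χ)
    (hS : IsMaxAltPathPairInternal G χ q S s(u, v)) :
    ∃ w, G.Adj u w ∧ s(χ s(u, v), χ s(u, w)) = q.map some := by
  obtain ⟨c₀, c₁, a, b, p, -, rfl, hp, -, he, ha, hb⟩ := hS
  have hua : u ≠ a := fun h ↦ ha (h ▸ Sym2.mem_mk_left u v)
  have hub : u ≠ b := fun h ↦ hb (h ▸ Sym2.mem_mk_left u v)
  obtain ⟨w, hwv, hw⟩ : ∃ w, w ≠ v ∧ s(u, w) ∈ p.edges := by
    obtain ⟨y, z, hyz, hy, hz⟩ := exists_two_edges_of_isPath_of_interior hp.1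
      (p.fst_mem_support_of_mem_edges he) hua hub
    rcases hyz.ne_or_ne v with hyv | hzv
    · exact ⟨y, hyv, hy⟩
    · exact ⟨z, hzv, hz⟩
  exact ⟨w, p.adj_of_mem_edges hw, hχ.colors_eq_of_mem_altEdges hwv.symm
    (hp.mem_altEdges_of_mem_edges he) (hp.mem_altEdges_of_mem_edges hw)⟩

end IsMaxAltPathPairInternal

theorem encard_internal_paths_le_encard_neighborSet [DecidableEq V]
    (hχ : IsPartialColoring G k χ) (u v : V) :
    {x : Sym2 (Fin k) × Finset (Sym2 V) |
        IsMaxAltPathPairInternal G χ x.1 x.2 s(u, v)}.encard ≤ (G.neighborSet u).encard := by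
  set paths := {x : Sym2 (Fin k) × Finset (Sym2 V) |
    IsMaxAltPathPairInternal G χ x.1 x.2 s(u, v)}
  have colors_injOn : Set.InjOn (fun x ↦ x.1.map some) paths := by
    rintro ⟨q, S⟩ hS ⟨q', T⟩ hT hq
    obtain rfl : q = q' := Sym2.map.injective (Option.some_injective _) hq
    exact Prod.ext rfl (hS.edges_unique hχ hT)
  have colors_subset : (fun x ↦ x.1.map some) '' paths ⊆
      (fun w ↦ s(χ s(u, v), χ s(u, w))) '' G.neighborSet u := by
    rintro _ ⟨x, hx, rfl⟩
    exact hx.exists_adj_colors_eq hχ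
  calc paths.encard
      = ((fun x ↦ x.1.map some) '' paths).encard := colors_injOn.encard_image.symm
    _ ≤ ((fun w ↦ s(χ s(u, v), χ s(u, w))) '' G.neighborSet u).encard :=
        Set.encard_le_encard colors_subset
    _ ≤ (G.neighborSet u).encard := Set.encard_image_le _ _

theorem internal_paths_le_weight_general [DecidableEq V]
    (hχ : IsPartialColoring G k χ) (u v : V) :
    {x : Sym2 (Fin k) × Finset (Sym2 V) |
        IsMaxAltPathPairInternal G χ x.1 x.2 s(u, v)}.encard
      ≤ min (G.neighborSet u).encard (G.neighborSet v).encard :=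
  le_min (encard_internal_paths_le_encard_neighborSet hχ u v)
    (Sym2.eq_swap (a := u) ▸ encard_internal_paths_le_encard_neighborSet hχ v u)

end

/-- A colored edge `e = (u,v)` is an internal edge of at most `w(e) = min (d(u), d(v))`
maximal alternating paths (over all pairs of distinct colors). -/
theorem internal_paths_le_weight {V : Type*} [Fintype V] [DecidableEq V]
    (G : SimpleGraph V) [DecidableRel G.Adj] {k : ℕ}
    (χ : Sym2 V → Option (Fin k)) (hχ : IsPartialColoring G k χ)
    (u v : V) (huv : G.Adj u v) (hcol : χ s(u, v) ≠ none) :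
    {x : Sym2 (Fin k) × Finset (Sym2 V) |
        IsMaxAltPathPairInternal G χ x.1 x.2 s(u, v)}.ncard
      ≤ min (G.degree u) (G.degree v) := by
  have bound := (Set.ncard_le_encard _).trans (internal_paths_le_weight_general hχ u v)
  simpa only [le_min_iff, ← Set.coe_fintypeCard, SimpleGraph.card_neighborSet_eq_degree,
    Nat.cast_le] using bound

end EC
end

section
/- Let G be a finite simple graph with m edges, let i ≥ 0, and let H₁, …, H_r be spanning subgraphs of G that partition the edge set of G and satisfy d_{H_j}(v) ≤ 2^{−i}·d_G(v) + 2 for every vertex v and every j ∈ {1,…,r}. Then Σ_{j=1}^{r} w(H_j) ≤ 2^{−i}·w(G) + 2m, where w(H) = Σ_{e=(u,v) ∈ E(H)} min(d_H(u), d_H(v)). -/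
namespace EC

/-- The weight of a graph `H`: the sum, over the edges `e = (u,v)` of `H`, of
`min (d_H(u), d_H(v))`. -/
noncomputable def weight {V : Type*} [Fintype V] (H : SimpleGraph V) : ℕ :=
  ∑ e ∈ (Set.toFinite H.edgeSet).toFinset,
    Sym2.lift ⟨fun u v => min (H.neighborSet u).ncard (H.neighborSet v).ncard,
      fun _ _ => min_comm _ _⟩ e

open Function SimpleGraph

section EdgeWeight

variable {V : Type*}

/-- The weight `min (d_H(u), d_H(v))` of a pair `s(u, v)` in `H`. It is defined on all of `Sym2 V`,
so that the weights of one edge in different graphs can be compared. A vertex of infinite degree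
counts as having degree `0`. -/
noncomputable def edgeWeight (H : SimpleGraph V) : Sym2 V → ℕ :=
  Sym2.lift ⟨fun u v => min (H.neighborSet u).ncard (H.neighborSet v).ncard,
    fun _ _ => min_comm _ _⟩

theorem edgeWeight_mk (H : SimpleGraph V) (u v : V) :
    edgeWeight H s(u, v) = min (H.neighborSet u).ncard (H.neighborSet v).ncard :=
  rfl

theorem weight_eq_sum_edgeWeight [Fintype V] (H : SimpleGraph V) [Fintype H.edgeSet] :
    weight H = ∑ e ∈ H.edgeFinset, edgeWeight H e := by
  rw [weight, Set.Finite.toFinset_eq_toFinset]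
  rfl

theorem edgeWeight_le_of_forall_ncard_le {R : Type*} [AddMonoidWithOne R] [PartialOrder R]
    [AddLeftMono R] [ZeroLEOneClass R] {G H : SimpleGraph V} {f : ℕ → R}
    (hf : ∀ v, ((H.neighborSet v).ncard : R) ≤ f (G.neighborSet v).ncard) (e : Sym2 V) :
    (edgeWeight H e : R) ≤ f (edgeWeight G e) := by
  induction e using Sym2.ind with
  | _ u v =>
    rw [edgeWeight_mk, edgeWeight_mk]
    -- The bound `hf` is applied at the endpoint of smaller degree in `G`.
    rcases le_total (G.neighborSet u).ncard (G.neighborSet v).ncard with huv | hvu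
    · rw [min_eq_left huv]
      exact (Nat.mono_cast (min_le_left _ _)).trans (hf u)
    · rw [min_eq_right hvu]
      exact (Nat.mono_cast (min_le_right _ _)).trans (hf v)

end EdgeWeight

section EdgeDisjoint

variable {V ι : Type*} {G : SimpleGraph V} {H : ι → SimpleGraph V}

theorem pairwise_disjoint_of_existsUnique_mem_edgeSet (hle : ∀ j, H j ≤ G)
    (hpart : ∀ e ∈ G.edgeSet, ∃! j, e ∈ (H j).edgeSet) : Pairwise (Disjoint on H) := by
  intro j k hjk
  rw [onFun, ← disjoint_edgeSet, Set.disjoint_left]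
  intro e hj hk
  exact hjk ((hpart e (edgeSet_mono (hle j) hj)).unique hj hk)

variable [Fintype ι] [Fintype G.edgeSet]

theorem sum_sum_edgeFinset_le_of_pairwise_disjoint {M : Type*} [AddCommMonoid M] [PartialOrder M]
    [IsOrderedAddMonoid M] [∀ j, Fintype (H j).edgeSet] (hle : ∀ j, H j ≤ G)
    (hdisj : Pairwise (Disjoint on H)) {g : Sym2 V → M} (hg : ∀ e ∈ G.edgeFinset, 0 ≤ g e) :
    ∑ j, ∑ e ∈ (H j).edgeFinset, g e ≤ ∑ e ∈ G.edgeFinset, g e := by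
  classical
  have hdisj_edges : (↑(Finset.univ : Finset ι) : Set ι).PairwiseDisjoint
      fun j => (H j).edgeFinset :=
    fun j _ k _ hjk => disjoint_edgeFinset.mpr (hdisj hjk)
  have hsubset : Finset.univ.biUnion (fun j => (H j).edgeFinset) ⊆ G.edgeFinset :=
    Finset.biUnion_subset.mpr fun j _ => edgeFinset_mono (hle j)
  rw [← Finset.sum_biUnion hdisj_edges]
  exact Finset.sum_le_sum_of_subset_of_nonneg hsubset fun e he _ => hg e he

variable [Fintype V] {R : Type*} [PartialOrder R]

theorem sum_weight_le_sum_edgeWeight_of_forall_ncard_le [AddCommMonoidWithOne R]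
    [IsOrderedAddMonoid R] [ZeroLEOneClass R] (hle : ∀ j, H j ≤ G)
    (hdisj : Pairwise (Disjoint on H)) {f : ℕ → R} (hf_nonneg : ∀ n, 0 ≤ f n)
    (hf : ∀ j v, (((H j).neighborSet v).ncard : R) ≤ f (G.neighborSet v).ncard) :
    ∑ j, (weight (H j) : R) ≤ ∑ e ∈ G.edgeFinset, f (edgeWeight G e) := by
  classical
  calc ∑ j, (weight (H j) : R)
      = ∑ j, ∑ e ∈ (H j).edgeFinset, (edgeWeight (H j) e : R) := by
        simp only [weight_eq_sum_edgeWeight, Nat.cast_sum]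
    _ ≤ ∑ j, ∑ e ∈ (H j).edgeFinset, f (edgeWeight G e) := by
        gcongr with j _ e
        exact edgeWeight_le_of_forall_ncard_le (hf j) e
    _ ≤ ∑ e ∈ G.edgeFinset, f (edgeWeight G e) :=
        sum_sum_edgeFinset_le_of_pairwise_disjoint hle hdisj fun _ _ => hf_nonneg _

theorem sum_weights_of_partition_general [Semiring R] [IsOrderedRing R] [G.LocallyFinite]
    (hle : ∀ j, H j ≤ G) (hdisj : Pairwise (Disjoint on H))
    {a b : R} (ha : 0 ≤ a) (hb : 0 ≤ b)
    (hdeg : ∀ j v, (((H j).neighborSet v).ncard : R) ≤ a * G.degree v + b) :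
    ∑ j, (weight (H j) : R) ≤ a * weight G + b * G.edgeFinset.card := by
  have hdeg_ncard (j : ι) (v : V) :
      (((H j).neighborSet v).ncard : R) ≤ a * (G.neighborSet v).ncard + b := by
    rw [← Set.fintypeCard_eq_ncard (G.neighborSet v), card_neighborSet_eq_degree]
    exact hdeg j v
  calc ∑ j, (weight (H j) : R)
      ≤ ∑ e ∈ G.edgeFinset, (a * edgeWeight G e + b) :=
        sum_weight_le_sum_edgeWeight_of_forall_ncard_le (f := fun n => a * n + b) hle hdisj
          (fun n => add_nonneg (mul_nonneg ha n.cast_nonneg) hb) hdeg_ncard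
    _ = a * weight G + b * G.edgeFinset.card := by
        rw [weight_eq_sum_edgeWeight, Finset.sum_add_distrib, Finset.sum_const, nsmul_eq_mul',
          Nat.cast_sum, Finset.mul_sum]

end EdgeDisjoint

/-- Let `G` be a finite simple graph with `m` edges, let `i ≥ 0`, and let `H 1, …, H r` be
spanning subgraphs of `G` that partition the edge set of `G` and satisfy
`d_{H j}(v) ≤ 2^{−i}·d_G(v) + 2` for every vertex `v` and every `j`. Then
`Σ_j w(H j) ≤ 2^{−i}·w(G) + 2m`. -/
theorem sum_weights_of_partition {V : Type*} [Fintype V] [DecidableEq V]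
    (G : SimpleGraph V) [DecidableRel G.Adj]
    (i r : ℕ) (H : Fin r → SimpleGraph V)
    (hle : ∀ j, H j ≤ G)
    (hpart : ∀ e ∈ G.edgeSet, ∃! j, e ∈ (H j).edgeSet)
    (hdeg : ∀ (j : Fin r) (v : V),
      (((H j).neighborSet v).ncard : ℝ) ≤ (2 : ℝ) ^ (-(i : ℤ)) * (G.degree v : ℝ) + 2) :
    (∑ j, (weight (H j) : ℝ))
      ≤ (2 : ℝ) ^ (-(i : ℤ)) * (weight G : ℝ) + 2 * (G.edgeFinset.card : ℝ) := by
  exact sum_weights_of_partition_general hle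
    (pairwise_disjoint_of_existsUnique_mem_edgeSet hle hpart) (by positivity) zero_le_two hdeg

end EC
end
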